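/- Let s and e be composable labelled transition systems with s eco e, let σ ∈ Utraces(s ∥ e), and let q_s ∈ Q_s, q_e ∈ Q_e. If s ∥ e ==σ==> q_s ∥ q_e, then (s after (σ↾L_s^δ), e after (σ↾L_e^δ)) ∈ R_U(s,e), s ==σ↾L_s^δ==> q_s, and e ==σ↾L_e^δ==> q_e. -/

import Mathlib

/-- Labels extended with the quiescence label `δ`. -/
inductive ELabel (Lab : Type) : Type
  | lab : Lab → ELabel Lab
  | delta : ELabel Lab

namespace ELabel

/-- Membership of an extended label in `𝓛^δ = 𝓛 ∪ {δ}`. -/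
def inL {Lab : Type} (Ls : Set Lab) : ELabel Lab → Prop
  | lab ℓ => ℓ ∈ Ls
  | delta => True

end ELabel

/-- A trace lies in `(𝓛^δ)*`. -/
def TraceIn {Lab : Type} (Ls : Set Lab) (σ : List (ELabel Lab)) : Prop :=
  ∀ x ∈ σ, ELabel.inL Ls x

/-- A labelled transition system.  `T q none q'` is an internal `τ`-step,
`T q (some ℓ) q'` is a step labelled `ℓ`. -/
structure LTS (Q : Type) (Lab : Type) where
  I : Set Lab
  U : Set Lab
  T : Q → Option Lab → Q → Prop
  q0 : Q

namespace LTS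

variable {Q Lab : Type}

/-- The label set `L = I ∪ U`. -/
def L (M : LTS Q Lab) : Set Lab := M.I ∪ M.U

/-- Standing assumptions on all LTSs: countable, disjoint input/output label
sets, transitions labelled within `L`, strong convergence (no infinite
`τ`-sequences), and image-finiteness. -/
def WellFormed (M : LTS Q Lab) : Prop :=
  M.I.Countable ∧ M.U.Countable ∧ Disjoint M.I M.U ∧
  (∀ q ℓ q', M.T q (some ℓ) q' → ℓ ∈ M.L) ∧
  (¬ ∃ f : ℕ → Q, ∀ n, M.T (f n) none (f (n + 1))) ∧
  (∀ q a, {q' | M.T q a q'}.Finite)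

/-- A state is quiescent if neither an output nor `τ` is enabled in it. -/
def Quiescent (M : LTS Q Lab) (q : Q) : Prop :=
  (∀ x ∈ M.U, ∀ q', ¬ M.T q (some x) q') ∧ ∀ q', ¬ M.T q none q'

/-- A single visible step `q --x--> q'` for `x ∈ L^δ`, where the quiescence
label `δ` gives a self-loop at quiescent states. -/
def VStep (M : LTS Q Lab) (q : Q) : ELabel Lab → Q → Prop
  | .lab ℓ, q' => M.T q (some ℓ) q'
  | .delta, q' => q' = q ∧ M.Quiescent q

/-- Zero or more `τ`-steps: `q ==ε==> q'`. -/
def Eps (M : LTS Q Lab) : Q → Q → Prop :=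
  Relation.ReflTransGen fun a b => M.T a none b

/-- Weak transition `q ==σ==> q'` for `σ ∈ (L^δ)*`. -/
inductive W (M : LTS Q Lab) : Q → List (ELabel Lab) → Q → Prop
  | nil {q q' : Q} : M.Eps q q' → W M q [] q'
  | snoc {q q1 q2 q' : Q} {σ : List (ELabel Lab)} {x : ELabel Lab} :
      W M q σ q1 → M.VStep q1 x q2 → M.Eps q2 q' → W M q (σ ++ [x]) q'

/-- `X after σ`, for a set of states `X`. -/
def afterSet (M : LTS Q Lab) (X : Set Q) (σ : List (ELabel Lab)) : Set Q :=
  {q' | ∃ q ∈ X, M.W q σ q'}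

/-- `M after σ`, from the initial state. -/
def after (M : LTS Q Lab) (σ : List (ELabel Lab)) : Set Q :=
  {q' | M.W M.q0 σ q'}

/-- The predicate underlying `out(q) ⊆ U ∪ {δ}`. -/
def outLabel (M : LTS Q Lab) (q : Q) : ELabel Lab → Prop
  | .lab ℓ => ℓ ∈ M.U ∧ ∃ q', M.T q (some ℓ) q'
  | .delta => M.Quiescent q

/-- `out(q)`. -/
def outq (M : LTS Q Lab) (q : Q) : Set (ELabel Lab) :=
  {x | M.outLabel q x}

/-- `in(q) = {ℓ ∈ I | q ==ℓ==>}`. -/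
def inq (M : LTS Q Lab) (q : Q) : Set Lab :=
  {ℓ | ℓ ∈ M.I ∧ ∃ q', M.W q [ELabel.lab ℓ] q'}

/-- `out(X) = ⋃_{q ∈ X} out(q)`. -/
def outSet (M : LTS Q Lab) (X : Set Q) : Set (ELabel Lab) :=
  ⋃ q ∈ X, M.outq q

/-- `in(X) = ⋂_{q ∈ X} in(q)`. -/
def inSet (M : LTS Q Lab) (X : Set Q) : Set Lab :=
  ⋂ q ∈ X, M.inq q

/-- Input-enabledness: `M` is an IOTS. -/
def InputEnabled (M : LTS Q Lab) : Prop :=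
  ∀ q, ∀ ℓ ∈ M.I, ∃ q', M.W q [ELabel.lab ℓ] q'

/-- `Utraces(M)`. -/
def Utraces (M : LTS Q Lab) : Set (List (ELabel Lab)) :=
  {σ | TraceIn M.L σ ∧ (∃ q', M.W M.q0 σ q') ∧
    ∀ σ1 ℓ σ2, σ = σ1 ++ ELabel.lab ℓ :: σ2 → ℓ ∈ M.I →
      ∀ q, M.W M.q0 σ1 q → ∃ q', M.W q [ELabel.lab ℓ] q'}

/-- An LTS is utrace-closed when every trace over `(L^δ)*` that it can
perform is a utrace. -/
def UtraceClosed (M : LTS Q Lab) : Prop :=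
  ∀ σ : List (ELabel Lab), TraceIn M.L σ → (∃ q', M.W M.q0 σ q') → σ ∈ M.Utraces

end LTS

/-- `i uioco s`. -/
def Uioco {Qi Qs Lab : Type} (i : LTS Qi Lab) (s : LTS Qs Lab) : Prop :=
  ∀ σ ∈ s.Utraces, i.outSet (i.after σ) ⊆ s.outSet (s.after σ)

/-- Composability: disjoint output label sets. -/
def Composable {Qs Qe Lab : Type} (s : LTS Qs Lab) (e : LTS Qe Lab) : Prop :=
  s.U ∩ e.U = ∅

/-- Parallel composition `s ∥ e`. -/
def par {Qs Qe Lab : Type} (s : LTS Qs Lab) (e : LTS Qe Lab) : LTS (Qs × Qe) Lab where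
  I := (s.I \ e.U) ∪ (e.I \ s.U)
  U := s.U ∪ e.U
  T := fun p a p' =>
    match a with
    | none =>
        (s.T p.1 none p'.1 ∧ p'.2 = p.2) ∨ (e.T p.2 none p'.2 ∧ p'.1 = p.1)
    | some ℓ =>
        (ℓ ∈ s.L ∧ ℓ ∉ e.L ∧ s.T p.1 (some ℓ) p'.1 ∧ p'.2 = p.2) ∨
        (ℓ ∈ e.L ∧ ℓ ∉ s.L ∧ e.T p.2 (some ℓ) p'.2 ∧ p'.1 = p.1) ∨
        (ℓ ∈ s.L ∧ ℓ ∈ e.L ∧ s.T p.1 (some ℓ) p'.1 ∧ e.T p.2 (some ℓ) p'.2)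
  q0 := (s.q0, e.q0)

/-- `s accepts e`: along utraces of `s ∥ e`, every output of `e` that is an
input of `s` is (weakly) enabled in `s`. -/
def Accepts {Qs Qe Lab : Type} (s : LTS Qs Lab) (e : LTS Qe Lab) : Prop :=
  ∀ σ ∈ (par s e).Utraces, ∀ qs qe, (par s e).W (par s e).q0 σ (qs, qe) →
    ∀ ℓ, ELabel.lab ℓ ∈ e.outq qe → ℓ ∈ s.I → ℓ ∈ s.inq qs

/-- `s mutually accepts e`. -/
def MutuallyAccepts {Qs Qe Lab : Type} (s : LTS Qs Lab) (e : LTS Qe Lab) : Prop :=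
  Accepts s e ∧ Accepts e s

/-- `R` is an ecosim for `s` and `e`. -/
def IsEcosim {Qs Qe Lab : Type} (s : LTS Qs Lab) (e : LTS Qe Lab)
    (R : Set (Set Qs × Set Qe)) : Prop :=
  (s.after [], e.after []) ∈ R ∧
  ∀ Xs Xe, (Xs, Xe) ∈ R →
    (∀ ℓ, ELabel.lab ℓ ∈ e.outSet Xe → ℓ ∈ s.I →
      ℓ ∈ s.inSet Xs ∧
        (s.afterSet Xs [ELabel.lab ℓ], e.afterSet Xe [ELabel.lab ℓ]) ∈ R) ∧
    (∀ ℓ, ELabel.lab ℓ ∈ s.outSet Xs → ℓ ∈ e.I →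
      ℓ ∈ e.inSet Xe ∧
        (s.afterSet Xs [ELabel.lab ℓ], e.afterSet Xe [ELabel.lab ℓ]) ∈ R) ∧
    (∀ ℓ, (ELabel.lab ℓ ∈ e.outSet Xe ∨ ℓ ∈ e.inSet Xe) → ℓ ∉ s.L →
      (Xs, e.afterSet Xe [ELabel.lab ℓ]) ∈ R) ∧
    (∀ ℓ, (ELabel.lab ℓ ∈ s.outSet Xs ∨ ℓ ∈ s.inSet Xs) → ℓ ∉ e.L →
      (s.afterSet Xs [ELabel.lab ℓ], Xe) ∈ R) ∧
    (∀ ℓ, ℓ ∈ s.inSet Xs → ℓ ∈ e.inSet Xe →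
      (s.afterSet Xs [ELabel.lab ℓ], e.afterSet Xe [ELabel.lab ℓ]) ∈ R) ∧
    (ELabel.delta ∈ s.outSet Xs → ELabel.delta ∈ e.outSet Xe →
      (s.afterSet Xs [ELabel.delta], e.afterSet Xe [ELabel.delta]) ∈ R)

/-- `s eco e`: there exists an ecosim for `s` and `e`. -/
def Eco {Qs Qe Lab : Type} (s : LTS Qs Lab) (e : LTS Qe Lab) : Prop :=
  ∃ R, IsEcosim s e R

/-- `R_U(s,e)`: the smallest relation closed under the given rules. -/
inductive RU {Qs Qe Lab : Type} (s : LTS Qs Lab) (e : LTS Qe Lab) :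
    Set Qs → Set Qe → Prop
  | base : RU s e (s.after []) (e.after [])
  | syncOutE {Xs : Set Qs} {Xe : Set Qe} (ℓ : Lab) :
      RU s e Xs Xe → ELabel.lab ℓ ∈ e.outSet Xe → ℓ ∈ s.I →
      RU s e (s.afterSet Xs [ELabel.lab ℓ]) (e.afterSet Xe [ELabel.lab ℓ])
  | syncOutS {Xs : Set Qs} {Xe : Set Qe} (ℓ : Lab) :
      RU s e Xs Xe → ELabel.lab ℓ ∈ s.outSet Xs → ℓ ∈ e.I →
      RU s e (s.afterSet Xs [ELabel.lab ℓ]) (e.afterSet Xe [ELabel.lab ℓ])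
  | internalE {Xs : Set Qs} {Xe : Set Qe} (ℓ : Lab) :
      RU s e Xs Xe → (ELabel.lab ℓ ∈ e.outSet Xe ∨ ℓ ∈ e.inSet Xe) → ℓ ∉ s.L →
      RU s e Xs (e.afterSet Xe [ELabel.lab ℓ])
  | internalS {Xs : Set Qs} {Xe : Set Qe} (ℓ : Lab) :
      RU s e Xs Xe → (ELabel.lab ℓ ∈ s.outSet Xs ∨ ℓ ∈ s.inSet Xs) → ℓ ∉ e.L →
      RU s e (s.afterSet Xs [ELabel.lab ℓ]) Xe
  | syncIn {Xs : Set Qs} {Xe : Set Qe} (ℓ : Lab) :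
      RU s e Xs Xe → ℓ ∈ s.inSet Xs → ℓ ∈ e.inSet Xe →
      RU s e (s.afterSet Xs [ELabel.lab ℓ]) (e.afterSet Xe [ELabel.lab ℓ])
  | qdelta {Xs : Set Qs} {Xe : Set Qe} :
      RU s e Xs Xe → ELabel.delta ∈ s.outSet Xs → ELabel.delta ∈ e.outSet Xe →
      RU s e (s.afterSet Xs [ELabel.delta]) (e.afterSet Xe [ELabel.delta])

open Classical in
/-- Projection `σ↾𝓛^δ` of a trace onto an (extended) label set: keeps `δ`
and the labels in `Ls`, removes all other labels. -/
noncomputable def projD {Lab : Type} (σ : List (ELabel Lab)) (Ls : Set Lab) :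
    List (ELabel Lab) :=
  σ.filter fun x => decide (ELabel.inL Ls x)

open Classical in
/-- Projection `σ↾𝓛` of a trace of plain labels onto a label set. -/
noncomputable def projL {Lab : Type} (σ : List Lab) (Ls : Set Lab) : List Lab :=
  σ.filter fun ℓ => decide (ℓ ∈ Ls)

open Classical in
/-- Substitution `σ[θ/δ]` of the label `θ` by the quiescence label `δ`. -/
noncomputable def substTheta {Lab : Type} (θ : Lab) (σ : List Lab) :
    List (ELabel Lab) :=
  σ.map fun ℓ => if ℓ = θ then ELabel.delta else ELabel.lab ℓ

/-- `⟨X⟩`: componentwise collection of a set of pairs of states. -/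
def collect {Qs Qe : Type} (X : Set (Qs × Qe)) : Set Qs × Set Qe :=
  (Prod.fst '' X, Prod.snd '' X)

/-- `q_s accepts q_e over σ`. -/
def AcceptsOver {Qs Qe Lab : Type} (s : LTS Qs Lab) (e : LTS Qe Lab)
    (qs : Qs) (qe : Qe) (σ : List (ELabel Lab)) : Prop :=
  ∀ σ1 σ2 : List (ELabel Lab), σ1 ++ σ2 = σ →
    ∀ (qs' : Qs) (qe' : Qe), (par s e).W (qs, qe) σ1 (qs', qe') →
      ∀ ℓ, ELabel.lab ℓ ∈ e.outq qe' → ℓ ∈ s.I → ℓ ∈ s.inq qs' ∧ ℓ ∈ e.U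

/-- `q_s mutually accepts q_e over σ`. -/
def MutuallyAcceptsOver {Qs Qe Lab : Type} (s : LTS Qs Lab) (e : LTS Qe Lab)
    (qs : Qs) (qe : Qe) (σ : List (ELabel Lab)) : Prop :=
  AcceptsOver s e qs qe σ ∧ AcceptsOver e s qe qs σ

/-- A test case: a quasi-finite tree-shaped LTS without `τ`-transitions, with
terminal states `pass` and `fail` carrying input self-loops, a special
quiescence-observation input `θ`, at most one output transition per state,
and receptive to all inputs other than `θ`. -/
structure TestCase (Qt Lab : Type) extends LTS Qt Lab where
  passS : Qt
  failS : Qt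
  theta : Lab
  theta_input : theta ∈ I
  no_tau : ∀ q q', ¬ T q none q'
  tree : ∀ q, q ≠ q0 → q ≠ passS → q ≠ failS →
    ∃! p : Qt × Option Lab, T p.1 p.2 q
  pass_loops : ∀ ℓ ∈ I, T passS (some ℓ) passS
  pass_terminal : ∀ a q', T passS a q' → q' = passS ∧ ∃ ℓ ∈ I, a = some ℓ
  fail_loops : ∀ ℓ ∈ I, T failS (some ℓ) failS
  fail_terminal : ∀ a q', T failS a q' → q' = failS ∧ ∃ ℓ ∈ I, a = some ℓ
  one_output : ∀ q ℓ ℓ' q' q'', ℓ ∈ U → ℓ' ∈ U →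
    T q (some ℓ) q' → T q (some ℓ') q'' → ℓ = ℓ' ∧ q' = q''
  receptive : ∀ q, ∀ ℓ ∈ I, ℓ ≠ theta → ∃ q', T q (some ℓ) q'

/-- Test execution `t ⫿ i` of a test case `t` with an implementation `i`. -/
def testExec {Qt Qi Lab : Type} (t : TestCase Qt Lab) (i : LTS Qi Lab) :
    LTS (Qt × Qi) Lab where
  I := ∅
  U := i.U ∪ (t.toLTS.L \ {t.theta})
  T := fun p a p' =>
    match a with
    | none => i.T p.2 none p'.2 ∧ p'.1 = p.1
    | some ℓ =>
        (ℓ ∈ i.L ∧ ℓ ∉ t.toLTS.L ∧ i.T p.2 (some ℓ) p'.2 ∧ p'.1 = p.1) ∨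
        (ℓ ∈ t.toLTS.L ∧ ℓ ∉ i.L ∧ ℓ ≠ t.theta ∧ t.T p.1 (some ℓ) p'.1 ∧ p'.2 = p.2) ∨
        (ℓ ∈ i.L ∧ ℓ ∈ t.toLTS.L ∧ t.T p.1 (some ℓ) p'.1 ∧ i.T p.2 (some ℓ) p'.2) ∨
        (ℓ = t.theta ∧ t.T p.1 (some ℓ) p'.1 ∧ p'.2 = p.2 ∧ i.Quiescent p.2)
  q0 := (t.q0, i.q0)

/-!
A weak transition of `s ∥ e` along a visible label is exactly a pair of weak transitions of the
components along the projections of that label, so runs of the components along the projections of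
a trace can be zipped into a run of `s ∥ e`. Splitting a run of `s ∥ e` can fail only at `δ`: an
output of one component may be blocked by the other, making the pair quiescent although its
components are not. On `R_U`, which is contained in every ecosim, such blocking is impossible.

By induction along the trace both projections are therefore runs, and it remains to see that one
more label stays in `R_U`. Outputs and `δ` are witnessed by the run at hand. An input has to be
enabled in *every* state of the projected afterset; zipping turns such a state into a state of
`s ∥ e` after the same utrace, where the input is enabled by the definition of `Utraces`.
-/

namespace LTS

variable {Q Lab : Type} {M : LTS Q Lab} {X : Set Q} {q q' r : Q} {σ τ : List (ELabel Lab)}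
  {x : ELabel Lab} {ℓ : Lab}

theorem W_nil_iff : M.W q [] q' ↔ M.Eps q q' := by
  refine ⟨fun h => ?_, W.nil⟩
  generalize hσ : ([] : List (ELabel Lab)) = σ at h
  cases h with
  | nil h => exact h
  | snoc => simp at hσ

theorem W_concat_iff :
    M.W q (σ ++ [x]) q' ↔ ∃ a b, M.W q σ a ∧ M.VStep a x b ∧ M.Eps b q' := by
  refine ⟨fun h => ?_, fun ⟨_, _, hσ, hx, hε⟩ => W.snoc hσ hx hε⟩
  generalize hτ : σ ++ [x] = τ at h
  cases h with
  | nil => simp at hτ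
  | snoc hσ hx hε =>
    obtain ⟨rfl, hxy⟩ := List.append_inj' hτ rfl
    obtain rfl := List.singleton_injective hxy
    exact ⟨_, _, hσ, hx, hε⟩

theorem W_singleton_iff : M.W q [x] q' ↔ ∃ a b, M.Eps q a ∧ M.VStep a x b ∧ M.Eps b q' := by
  simpa only [List.nil_append, W_nil_iff] using W_concat_iff (M := M) (σ := []) (x := x)

theorem W.trans_eps (h : M.W q σ r) (hε : M.Eps r q') : M.W q σ q' := by
  cases h with
  | nil h => exact W.nil (h.trans hε)
  | snoc hσ hx h => exact W.snoc hσ hx (h.trans hε)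

theorem W_append_iff : M.W q (σ ++ τ) q' ↔ ∃ a, M.W q σ a ∧ M.W a τ q' := by
  induction τ using List.reverseRecOn generalizing q' with
  | nil =>
    simp only [List.append_nil, W_nil_iff]
    exact ⟨fun h => ⟨q', h, .refl⟩, fun ⟨_, h, hε⟩ => h.trans_eps hε⟩
  | append_singleton τ x ih =>
    simp only [← List.append_assoc, W_concat_iff, ih]
    tauto

theorem Quiescent.eq_of_eps (hq : M.Quiescent q) (h : M.Eps q q') : q' = q := by
  obtain rfl | ⟨_, hτ, -⟩ := h.cases_head
  · rfl
  · exact absurd hτ (hq.2 _)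

theorem W_concat_delta_iff : M.W q (σ ++ [.delta]) q' ↔ M.W q σ q' ∧ M.Quiescent q' := by
  rw [W_concat_iff]
  constructor
  · rintro ⟨a, _, hσ, ⟨rfl, hq⟩, hε⟩
    obtain rfl := hq.eq_of_eps hε
    exact ⟨hσ, hq⟩
  · rintro ⟨hσ, hq⟩
    exact ⟨q', q', hσ, ⟨rfl, hq⟩, .refl⟩

theorem exists_T_of_W_lab (hq : ∀ r, ¬ M.T q none r) (h : M.W q [.lab ℓ] q') :
    ∃ r, M.T q (some ℓ) r := by
  obtain ⟨a, b, hε, hℓ, -⟩ := W_singleton_iff.1 h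
  obtain rfl | ⟨_, hτ, -⟩ := hε.cases_head
  · exact ⟨b, hℓ⟩
  · exact absurd hτ (hq _)

theorem after_append : M.after (σ ++ τ) = M.afterSet (M.after σ) τ :=
  Set.ext fun _ => W_append_iff

theorem mem_outSet_iff : x ∈ M.outSet X ↔ ∃ q ∈ X, x ∈ M.outq q := by
  simp only [outSet, Set.mem_iUnion, exists_prop]

theorem mem_inSet_iff : ℓ ∈ M.inSet X ↔ ∀ q ∈ X, ℓ ∈ M.inq q := by
  simp only [inSet, Set.mem_iInter]

theorem lab_mem_outSet_after (hℓ : ℓ ∈ M.U) (h : M.W M.q0 (σ ++ [.lab ℓ]) q') :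
    .lab ℓ ∈ M.outSet (M.after σ) := by
  obtain ⟨a, b, hσ, hstep, -⟩ := W_concat_iff.1 h
  exact mem_outSet_iff.2 ⟨a, hσ, hℓ, b, hstep⟩

theorem delta_mem_outSet_after (h : M.W M.q0 (σ ++ [.delta]) q') :
    .delta ∈ M.outSet (M.after σ) :=
  have ⟨hσ, hq⟩ := W_concat_delta_iff.1 h
  mem_outSet_iff.2 ⟨q', hσ, hq⟩

theorem mem_Utraces_of_append (h : σ ++ τ ∈ M.Utraces) : σ ∈ M.Utraces := by
  obtain ⟨hL, ⟨q, hq⟩, hin⟩ := h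
  obtain ⟨a, ha, -⟩ := W_append_iff.1 hq
  refine ⟨fun x hx => hL x (List.mem_append_left _ hx), ⟨a, ha⟩, fun σ₁ ℓ σ₂ hσ => ?_⟩
  exact hin σ₁ ℓ (σ₂ ++ τ) (by simp [hσ])

end LTS

section Projection

variable {Lab : Type} {K : Set Lab} {ℓ : Lab}

theorem projD_append (σ τ : List (ELabel Lab)) (K : Set Lab) :
    projD (σ ++ τ) K = projD σ K ++ projD τ K :=
  List.filter_append ..

theorem projD_delta (K : Set Lab) : projD [.delta] K = [.delta] := by
  simp [projD, show ELabel.inL K .delta from trivial]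

theorem projD_lab_of_mem (h : ℓ ∈ K) : projD [.lab ℓ] K = [.lab ℓ] := by
  simp [projD, ELabel.inL, h]

theorem projD_lab_of_notMem (h : ℓ ∉ K) : projD [.lab ℓ] K = [] := by
  simp [projD, ELabel.inL, h]

end Projection

section Par

variable {Qs Qe Lab : Type} {s : LTS Qs Lab} {e : LTS Qe Lab} {p p' : Qs × Qe}
  {a a' : Qs} {b b' : Qe} {σ : List (ELabel Lab)} {ℓ : Lab}

theorem Composable.symm (h : Composable s e) : Composable e s :=
  (Set.inter_comm _ _).trans h

theorem Composable.mem_I_of_mem_U (h : Composable s e) (hs : ℓ ∈ s.U) (he : ℓ ∈ e.L) : ℓ ∈ e.I :=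
  he.resolve_right fun heU => (h ▸ ⟨hs, heU⟩ : ℓ ∈ (∅ : Set Lab))

theorem mem_L_par_iff : ℓ ∈ (par s e).L ↔ ℓ ∈ s.L ∨ ℓ ∈ e.L := by
  simp only [LTS.L, par, Set.mem_union, Set.mem_sdiff]
  tauto

theorem par_T_swap_iff {α : Option Lab} :
    (par e s).T p.swap α p'.swap ↔ (par s e).T p α p' := by
  cases α <;> simp only [par, Prod.fst_swap, Prod.snd_swap] <;> tauto

theorem par_eps_iff : (par s e).Eps p p' ↔ s.Eps p.1 p'.1 ∧ e.Eps p.2 p'.2 := by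
  constructor
  · intro h
    induction h with
    | refl => exact ⟨.refl, .refl⟩
    | tail _ hτ ih =>
      obtain ⟨hs, he⟩ | ⟨he, hs⟩ := hτ
      · exact ⟨ih.1.tail hs, he ▸ ih.2⟩
      · exact ⟨hs ▸ ih.1, ih.2.tail he⟩
  · rintro ⟨hs, he⟩
    have left : (par s e).Eps (p.1, p.2) (p'.1, p.2) :=
      hs.lift (·, p.2) fun _ _ h => .inl ⟨h, rfl⟩
    have right : (par s e).Eps (p'.1, p.2) (p'.1, p'.2) :=
      he.lift (p'.1, ·) fun _ _ h => .inr ⟨h, rfl⟩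
    exact left.trans right

theorem W_projD_of_par_W_lab (h : (par s e).W p [.lab ℓ] p') :
    s.W p.1 (projD [.lab ℓ] s.L) p'.1 ∧ e.W p.2 (projD [.lab ℓ] e.L) p'.2 := by
  obtain ⟨c, d, hpre, hstep, hpost⟩ := LTS.W_singleton_iff.1 h
  obtain ⟨hs₁, he₁⟩ := par_eps_iff.1 hpre
  obtain ⟨hs₂, he₂⟩ := par_eps_iff.1 hpost
  obtain ⟨hs, he, hT, hstay⟩ | ⟨he, hs, hT, hstay⟩ | ⟨hs, he, hTs, hTe⟩ := hstep
  · rw [projD_lab_of_mem hs, projD_lab_of_notMem he]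
    exact ⟨LTS.W_singleton_iff.2 ⟨_, _, hs₁, hT, hs₂⟩, .nil (he₁.trans (hstay ▸ he₂))⟩
  · rw [projD_lab_of_notMem hs, projD_lab_of_mem he]
    exact ⟨.nil (hs₁.trans (hstay ▸ hs₂)), LTS.W_singleton_iff.2 ⟨_, _, he₁, hT, he₂⟩⟩
  · rw [projD_lab_of_mem hs, projD_lab_of_mem he]
    exact ⟨LTS.W_singleton_iff.2 ⟨_, _, hs₁, hTs, hs₂⟩,
      LTS.W_singleton_iff.2 ⟨_, _, he₁, hTe, he₂⟩⟩

theorem W_fst_of_par_W_lab (hℓ : ℓ ∈ s.L) (h : (par s e).W p [.lab ℓ] p') :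
    s.W p.1 [.lab ℓ] p'.1 :=
  projD_lab_of_mem hℓ ▸ (W_projD_of_par_W_lab h).1

theorem W_snd_of_par_W_lab (hℓ : ℓ ∈ e.L) (h : (par s e).W p [.lab ℓ] p') :
    e.W p.2 [.lab ℓ] p'.2 :=
  projD_lab_of_mem hℓ ▸ (W_projD_of_par_W_lab h).2

theorem par_W_lab_of_W_projD (hℓ : ℓ ∈ (par s e).L) (hs : s.W p.1 (projD [.lab ℓ] s.L) p'.1)
    (he : e.W p.2 (projD [.lab ℓ] e.L) p'.2) : (par s e).W p [.lab ℓ] p' := by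
  rw [LTS.W_singleton_iff]
  simp only [par_eps_iff]
  by_cases hsL : ℓ ∈ s.L <;> by_cases heL : ℓ ∈ e.L
  · rw [projD_lab_of_mem hsL, LTS.W_singleton_iff] at hs
    rw [projD_lab_of_mem heL, LTS.W_singleton_iff] at he
    obtain ⟨a, a', hs₁, hTs, hs₂⟩ := hs
    obtain ⟨b, b', he₁, hTe, he₂⟩ := he
    exact ⟨(a, b), (a', b'), ⟨hs₁, he₁⟩, .inr (.inr ⟨hsL, heL, hTs, hTe⟩), hs₂, he₂⟩
  · rw [projD_lab_of_mem hsL, LTS.W_singleton_iff] at hs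
    rw [projD_lab_of_notMem heL, LTS.W_nil_iff] at he
    obtain ⟨a, a', hs₁, hTs, hs₂⟩ := hs
    exact ⟨(a, p.2), (a', p.2), ⟨hs₁, .refl⟩, .inl ⟨hsL, heL, hTs, rfl⟩, hs₂, he⟩
  · rw [projD_lab_of_notMem hsL, LTS.W_nil_iff] at hs
    rw [projD_lab_of_mem heL, LTS.W_singleton_iff] at he
    obtain ⟨b, b', he₁, hTe, he₂⟩ := he
    exact ⟨(p.1, b), (p.1, b'), ⟨.refl, he₁⟩, .inr (.inl ⟨heL, hsL, hTe, rfl⟩), hs, he₂⟩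
  · exact absurd (mem_L_par_iff.1 hℓ) (not_or.2 ⟨hsL, heL⟩)

theorem par_quiescent_swap (h : (par s e).Quiescent p) : (par e s).Quiescent p.swap :=
  ⟨fun ℓ hℓ p' hT => h.1 ℓ hℓ.symm p'.swap (par_T_swap_iff.1 hT),
    fun p' hτ => h.2 p'.swap (par_T_swap_iff.1 hτ)⟩

theorem par_quiescent (hs : s.Quiescent a) (he : e.Quiescent b) :
    (par s e).Quiescent (a, b) := by
  constructor
  · rintro ℓ hℓ _ (⟨-, hℓe, hT, -⟩ | ⟨-, hℓs, hT, -⟩ | ⟨-, -, hTs, hTe⟩)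
    · exact hs.1 ℓ (hℓ.resolve_right fun h => hℓe (.inr h)) _ hT
    · exact he.1 ℓ (hℓ.resolve_left fun h => hℓs (.inr h)) _ hT
    · exact hℓ.elim (hs.1 ℓ · _ hTs) (he.1 ℓ · _ hTe)
  · rintro _ (⟨hT, -⟩ | ⟨hT, -⟩)
    · exact hs.2 _ hT
    · exact he.2 _ hT

theorem quiescent_fst_of_par (hcomp : Composable s e)
    (hacc : ∀ ℓ, .lab ℓ ∈ s.outq a → ℓ ∈ e.I → ℓ ∈ e.inq b)
    (h : (par s e).Quiescent (a, b)) : s.Quiescent a := by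
  refine ⟨fun ℓ hℓ a' hT => ?_, fun a' hτ => h.2 (a', b) (.inl ⟨hτ, rfl⟩)⟩
  by_cases hℓe : ℓ ∈ e.L
  · obtain ⟨-, _, hW⟩ := hacc ℓ ⟨hℓ, a', hT⟩ (hcomp.mem_I_of_mem_U hℓ hℓe)
    obtain ⟨b', hTe⟩ := LTS.exists_T_of_W_lab (fun r hτ => h.2 (a, r) (.inr ⟨hτ, rfl⟩)) hW
    exact h.1 ℓ (.inl hℓ) (a', b') (.inr (.inr ⟨.inr hℓ, hℓe, hT, hTe⟩))
  · exact h.1 ℓ (.inl hℓ) (a', b) (.inl ⟨.inr hℓ, hℓe, hT, rfl⟩)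

theorem par_W_of_W_projD (hσ : TraceIn (par s e).L σ) (hs : s.W a (projD σ s.L) a')
    (he : e.W b (projD σ e.L) b') : (par s e).W (a, b) σ (a', b') := by
  induction σ using List.reverseRecOn generalizing a' b' with
  | nil => exact .nil (par_eps_iff.2 ⟨LTS.W_nil_iff.1 hs, LTS.W_nil_iff.1 he⟩)
  | append_singleton σ x ih =>
    obtain ⟨hσ', hx⟩ := List.forall_mem_append.1 hσ
    rw [projD_append] at hs he
    cases x with
    | delta =>
      rw [projD_delta, LTS.W_concat_delta_iff] at hs he
      exact LTS.W_concat_delta_iff.2 ⟨ih hσ' hs.1 he.1, par_quiescent hs.2 he.2⟩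
    | lab ℓ =>
      obtain ⟨a₁, hsσ, hsℓ⟩ := LTS.W_append_iff.1 hs
      obtain ⟨b₁, heσ, heℓ⟩ := LTS.W_append_iff.1 he
      have hℓ : ℓ ∈ (par s e).L := hx _ List.mem_cons_self
      exact LTS.W_append_iff.2 ⟨(a₁, b₁), ih hσ' hsσ heσ, par_W_lab_of_W_projD hℓ hsℓ heℓ⟩

theorem exists_par_W_of_utrace (hσ : σ ++ [.lab ℓ] ∈ (par s e).Utraces) (hℓ : ℓ ∈ (par s e).I)
    (hs : s.W s.q0 (projD σ s.L) a) (he : e.W e.q0 (projD σ e.L) b) :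
    ∃ p', (par s e).W (a, b) [.lab ℓ] p' :=
  hσ.2.2 σ ℓ [] rfl hℓ (a, b) (par_W_of_W_projD (LTS.mem_Utraces_of_append hσ).1 hs he)

end Par

section RU

variable {Qs Qe Lab : Type} {s : LTS Qs Lab} {e : LTS Qe Lab} {Xs : Set Qs} {Xe : Set Qe}
  {a : Qs} {b : Qe} {p' : Qs × Qe} {α β : List (ELabel Lab)} {ℓ : Lab}

theorem RU.mem_of_isEcosim {R : Set (Set Qs × Set Qe)} (hR : IsEcosim s e R)
    (h : RU s e Xs Xe) : (Xs, Xe) ∈ R := by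
  obtain ⟨hbase, hclosed⟩ := hR
  induction h with
  | base => exact hbase
  | syncOutE ℓ _ hout hin ih => exact ((hclosed _ _ ih).1 ℓ hout hin).2
  | syncOutS ℓ _ hout hin ih => exact ((hclosed _ _ ih).2.1 ℓ hout hin).2
  | internalE ℓ _ hen hℓ ih => exact (hclosed _ _ ih).2.2.1 ℓ hen hℓ
  | internalS ℓ _ hen hℓ ih => exact (hclosed _ _ ih).2.2.2.1 ℓ hen hℓ
  | syncIn ℓ _ hs he ih => exact (hclosed _ _ ih).2.2.2.2.1 ℓ hs he
  | qdelta _ hs he ih => exact (hclosed _ _ ih).2.2.2.2.2 hs he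

theorem RU.quiescent_of_par (hRU : RU s e Xs Xe) (hcomp : Composable s e) (heco : Eco s e)
    (ha : a ∈ Xs) (hb : b ∈ Xe) (h : (par s e).Quiescent (a, b)) :
    s.Quiescent a ∧ e.Quiescent b := by
  obtain ⟨R, hR⟩ := heco
  obtain ⟨accepts_e, accepts_s, -⟩ := hR.2 _ _ (hRU.mem_of_isEcosim hR)
  constructor
  · refine quiescent_fst_of_par hcomp (fun ℓ hout hℓ => ?_) h
    exact LTS.mem_inSet_iff.1 (accepts_s ℓ (LTS.mem_outSet_iff.2 ⟨a, ha, hout⟩) hℓ).1 b hb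
  · refine quiescent_fst_of_par hcomp.symm (fun ℓ hout hℓ => ?_) (par_quiescent_swap h)
    exact LTS.mem_inSet_iff.1 (accepts_e ℓ (LTS.mem_outSet_iff.2 ⟨b, hb, hout⟩) hℓ).1 a ha

theorem RU.after_delta (hRU : RU s e (s.after α) (e.after β))
    (hs : s.W s.q0 (α ++ [.delta]) a) (he : e.W e.q0 (β ++ [.delta]) b) :
    RU s e (s.after (α ++ [.delta])) (e.after (β ++ [.delta])) := by
  rw [LTS.after_append, LTS.after_append]
  exact hRU.qdelta (LTS.delta_mem_outSet_after hs) (LTS.delta_mem_outSet_after he)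

theorem RU.after_lab (hRU : RU s e (s.after α) (e.after β)) (hcomp : Composable s e)
    (ha : a ∈ s.after α) (hb : b ∈ e.after β) (hW : (par s e).W (a, b) [.lab ℓ] p')
    (hin : ℓ ∈ (par s e).I → ∀ a ∈ s.after α, ∀ b ∈ e.after β,
      ∃ p', (par s e).W (a, b) [.lab ℓ] p') :
    RU s e (s.after (α ++ projD [.lab ℓ] s.L)) (e.after (β ++ projD [.lab ℓ] e.L)) := by
  have s_out (hU : ℓ ∈ s.U) : .lab ℓ ∈ s.outSet (s.after α) :=
    LTS.lab_mem_outSet_after hU (LTS.W_append_iff.2 ⟨a, ha, W_fst_of_par_W_lab (.inr hU) hW⟩)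
  have e_out (hU : ℓ ∈ e.U) : .lab ℓ ∈ e.outSet (e.after β) :=
    LTS.lab_mem_outSet_after hU (LTS.W_append_iff.2 ⟨b, hb, W_snd_of_par_W_lab (.inr hU) hW⟩)
  have s_in (hI : ℓ ∈ s.I) (hU : ℓ ∉ e.U) : ℓ ∈ s.inSet (s.after α) :=
    LTS.mem_inSet_iff.2 fun a₁ ha₁ =>
      have ⟨p', h⟩ := hin (.inl ⟨hI, hU⟩) a₁ ha₁ b hb
      ⟨hI, p'.1, W_fst_of_par_W_lab (.inl hI) h⟩
  have e_in (hI : ℓ ∈ e.I) (hU : ℓ ∉ s.U) : ℓ ∈ e.inSet (e.after β) :=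
    LTS.mem_inSet_iff.2 fun b₁ hb₁ =>
      have ⟨p', h⟩ := hin (.inr ⟨hI, hU⟩) a ha b₁ hb₁
      ⟨hI, p'.2, W_snd_of_par_W_lab (.inl hI) h⟩
  by_cases hs : ℓ ∈ s.L <;> by_cases he : ℓ ∈ e.L
  · rw [projD_lab_of_mem hs, projD_lab_of_mem he, LTS.after_append, LTS.after_append]
    by_cases hsU : ℓ ∈ s.U
    · exact hRU.syncOutS ℓ (s_out hsU) (hcomp.mem_I_of_mem_U hsU he)
    by_cases heU : ℓ ∈ e.U
    · exact hRU.syncOutE ℓ (e_out heU) (hcomp.symm.mem_I_of_mem_U heU hs)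
    · exact hRU.syncIn ℓ (s_in (hs.resolve_right hsU) heU) (e_in (he.resolve_right heU) hsU)
  · rw [projD_lab_of_mem hs, projD_lab_of_notMem he, List.append_nil, LTS.after_append]
    exact hRU.internalS ℓ (hs.symm.imp s_out (s_in · fun hU => he (.inr hU))) he
  · rw [projD_lab_of_notMem hs, projD_lab_of_mem he, List.append_nil, LTS.after_append]
    exact hRU.internalE ℓ (he.symm.imp e_out (e_in · fun hU => hs (.inr hU))) hs
  · rw [projD_lab_of_notMem hs, projD_lab_of_notMem he, List.append_nil, List.append_nil]
    exact hRU

end RU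

theorem once_in_RU_always_in_RU_general {Qs Qe Lab : Type} {s : LTS Qs Lab} {e : LTS Qe Lab}
    (hcomp : Composable s e) (heco : Eco s e) {σ : List (ELabel Lab)}
    (hσ : σ ∈ (par s e).Utraces) {qs : Qs} {qe : Qe}
    (hw : (par s e).W (par s e).q0 σ (qs, qe)) :
    RU s e (s.after (projD σ s.L)) (e.after (projD σ e.L)) ∧
      s.W s.q0 (projD σ s.L) qs ∧ e.W e.q0 (projD σ e.L) qe := by
  induction σ using List.reverseRecOn generalizing qs qe with
  | nil =>
    obtain ⟨hs, he⟩ := par_eps_iff.1 (LTS.W_nil_iff.1 hw)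
    exact ⟨.base, .nil hs, .nil he⟩
  | append_singleton σ x ih =>
    have hσ' := LTS.mem_Utraces_of_append hσ
    rw [projD_append, projD_append]
    cases x with
    | delta =>
      obtain ⟨hwσ, hq⟩ := LTS.W_concat_delta_iff.1 hw
      obtain ⟨hRU, hs, he⟩ := ih hσ' hwσ
      obtain ⟨hqs, hqe⟩ := hRU.quiescent_of_par hcomp heco hs he hq
      have hsδ := LTS.W_concat_delta_iff.2 ⟨hs, hqs⟩
      have heδ := LTS.W_concat_delta_iff.2 ⟨he, hqe⟩
      rw [projD_delta, projD_delta]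
      exact ⟨hRU.after_delta hsδ heδ, hsδ, heδ⟩
    | lab ℓ =>
      obtain ⟨⟨a, b⟩, hwσ, hwℓ⟩ := LTS.W_append_iff.1 hw
      obtain ⟨hRU, hs, he⟩ := ih hσ' hwσ
      obtain ⟨hsℓ, heℓ⟩ := W_projD_of_par_W_lab hwℓ
      have hin (hℓ : ℓ ∈ (par s e).I) (a) (ha : s.W s.q0 _ a) (b) (hb : e.W e.q0 _ b) :=
        exists_par_W_of_utrace hσ hℓ ha hb
      exact ⟨hRU.after_lab hcomp hs he hwℓ hin,
        LTS.W_append_iff.2 ⟨a, hs, hsℓ⟩, LTS.W_append_iff.2 ⟨b, he, heℓ⟩⟩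

/-- for composable `s`, `e` with `s eco e` and a utrace `σ` of
`s ∥ e` with `s ∥ e ==σ==> q_s ∥ q_e`, the pair of projected aftersets is in
`R_U(s,e)` and both components reach their states along the projections. -/
theorem once_in_RU_always_in_RU {Qs Qe Lab : Type}
    (s : LTS Qs Lab) (e : LTS Qe Lab)
    (hs : s.WellFormed) (he : e.WellFormed)
    (hcomp : Composable s e) (heco : Eco s e)
    (σ : List (ELabel Lab)) (hσ : σ ∈ (par s e).Utraces)
    (qs : Qs) (qe : Qe)
    (hw : (par s e).W (par s e).q0 σ (qs, qe)) :
    RU s e (s.after (projD σ s.L)) (e.after (projD σ e.L)) ∧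
      s.W s.q0 (projD σ s.L) qs ∧ e.W e.q0 (projD σ e.L) qe :=
  once_in_RU_always_in_RU_general hcomp heco hσ hw
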